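/- Let φ : [0,∞) × ℝⁿ → ℝ be a smooth solution of □_g φ - ∂_t φ = 0 such that φ(t, ·) has compact support for every t ≥ 0. Define E_0(t) = (1/2) ∫_{ℝⁿ} (∂_t φ(t,x))² e^{nt/2} dx and E_1(t) = (1/2) ∫_{ℝⁿ} e^{-t} Σ_{i=1}^n (∂_{x_i} φ(t,x))² e^{nt/2} dx, and E(t) = E_0(t) + E_1(t). Then E is differentiable on (0, ∞) and (d/dt) E(t) = -((n+4)/2) E_0(t) + ((n-2)/2) E_1(t) for all t > 0. -/

import Mathlib

/-!
Multiply the equation by `φₜ`. For any smooth weight `w` the density `e = (φₜ² + e^{-t} |∇φ|²) / 2`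
satisfies
`∂ₜ (e w) = e wₜ - (n/2 + 1) φₜ² w - e^{-t} |∇φ|² w / 2 - e^{-t} φₜ ∇φ · ∇w + div (e^{-t} φₜ w ∇φ)`,
and the divergence integrates to zero on a slice where `φ` has compact support. With
`w = e^{nt/2}` this is the claimed identity. The general form is `hasDerivAt_weighted_energy`.

Differentiating under the integral needs more than compact support of every single slice: the
supports must stay in one compact set for all times near a given one. This is proved in
`exists_locally_uniform_support`, in two steps.

* Baire's theorem (`exists_uniform_support`) yields some time `s` before the given time near which
  the supports are uniformly bounded, so that `φ`, `φₜ` and `∇φ` all vanish at time `s` outside a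
  ball.
* Finite speed of propagation (`pT_eq_zero_of_cone`) carries this bound forward from `s`. It comes
  from the same weighted identity, with the smooth weight `w = g((b - t)² - |x - a|²)` supported in
  a cone, `g(u) = e^{-1/u}` for `u > 0` and `g(u) = 0` otherwise. For `0 ≤ t < b` the speed
  `e^{-t/2}` is at most one, which makes the weighted energy nonincreasing. If it vanishes
  initially, then `φₜ` vanishes on the axis of the cone, so `φ(·, a)` is constant there.
-/

open Real MeasureTheory

/-- Time derivative ∂ₜ of a function on ℝ × ℝⁿ. -/
noncomputable def pT (n : ℕ) (φ : ℝ × (Fin n → ℝ) → ℝ) : ℝ × (Fin n → ℝ) → ℝ :=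
  fun p => deriv (fun s => φ (s, p.2)) p.1

/-- Spatial derivative ∂ₓᵢ of a function on ℝ × ℝⁿ. -/
noncomputable def pX (n : ℕ) (i : Fin n) (φ : ℝ × (Fin n → ℝ) → ℝ) : ℝ × (Fin n → ℝ) → ℝ :=
  fun p => deriv (fun s => φ (p.1, Function.update p.2 i s)) (p.2 i)

/-- Mixed spatial derivative D^I = ∂ₓ₁^{I₁} ⋯ ∂ₓₙ^{Iₙ}. -/
noncomputable def Dmix (n : ℕ) (I : Fin n → ℕ) (φ : ℝ × (Fin n → ℝ) → ℝ) : ℝ × (Fin n → ℝ) → ℝ :=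
  (List.ofFn (fun i : Fin n => (pX n i)^[I i])).foldr (· ∘ ·) id φ

/-- The de Sitter wave operator □_g φ = -∂ₜ²φ - (n/2)∂ₜφ + e^{-t} Σᵢ ∂ₓᵢ²φ. -/
noncomputable def dBox (n : ℕ) (φ : ℝ × (Fin n → ℝ) → ℝ) : ℝ × (Fin n → ℝ) → ℝ :=
  fun p => -(pT n (pT n φ) p) - ((n : ℝ) / 2) * pT n φ p
    + Real.exp (-p.1) * ∑ i : Fin n, pX n i (pX n i φ) p

/-- The de Sitter null form Q(φ,ψ) = -φₜψₜ + e^{-t} Σᵢ φᵢψᵢ. -/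
noncomputable def nullQ (n : ℕ) (φ ψ : ℝ × (Fin n → ℝ) → ℝ) : ℝ × (Fin n → ℝ) → ℝ :=
  fun p => -(pT n φ p) * pT n ψ p + Real.exp (-p.1) * ∑ i : Fin n, pX n i φ p * pX n i ψ p

open scoped Topology ContDiff

/-! ### Coordinate derivatives and parametric integrals -/

section Calculus

variable {n : ℕ} {f : ℝ × (Fin n → ℝ) → ℝ}

lemma hasDerivAt_time (hf : ContDiff ℝ (⊤ : ℕ∞) f) (t : ℝ) (x : Fin n → ℝ) :
    HasDerivAt (fun s => f (s, x)) (fderiv ℝ f (t, x) (1, 0)) t := by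
  have h1 : HasFDerivAt f (fderiv ℝ f (t, x)) (t, x) :=
    (hf.differentiable (by simp) (t, x)).hasFDerivAt
  have h2 : HasDerivAt (fun s : ℝ => (s, x)) ((1 : ℝ), (0 : Fin n → ℝ)) t :=
    (hasDerivAt_id t).prodMk (hasDerivAt_const t x)
  exact h1.comp_hasDerivAt t h2

lemma pT_eq (hf : ContDiff ℝ (⊤ : ℕ∞) f) : pT n f = fun p => fderiv ℝ f p (1, 0) := by
  funext p
  exact (hasDerivAt_time hf p.1 p.2).deriv

lemma hasDerivAt_pT (hf : ContDiff ℝ (⊤ : ℕ∞) f) (t : ℝ) (x : Fin n → ℝ) :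
    HasDerivAt (fun s => f (s, x)) (pT n f (t, x)) t := by
  rw [pT_eq hf]
  exact hasDerivAt_time hf t x

lemma hasDerivAt_space (hf : ContDiff ℝ (⊤ : ℕ∞) f) (i : Fin n) (t : ℝ) (x : Fin n → ℝ) :
    HasDerivAt (fun s => f (t, Function.update x i s))
      (fderiv ℝ f (t, x) (0, Pi.single i 1)) (x i) := by
  have h1 : HasFDerivAt f (fderiv ℝ f (t, x)) (t, Function.update x i (x i)) := by
    rw [Function.update_eq_self]
    exact (hf.differentiable (by simp) (t, x)).hasFDerivAt
  have h2 : HasDerivAt (fun s : ℝ => (t, Function.update x i s))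
      ((0 : ℝ), (Pi.single i 1 : Fin n → ℝ)) (x i) :=
    (hasDerivAt_const _ t).prodMk (hasDerivAt_update x i (x i))
  exact h1.comp_hasDerivAt (x i) h2

lemma pX_eq (hf : ContDiff ℝ (⊤ : ℕ∞) f) (i : Fin n) :
    pX n i f = fun p => fderiv ℝ f p (0, Pi.single i 1) := by
  funext p
  exact (hasDerivAt_space hf i p.1 p.2).deriv

lemma hasDerivAt_pX (hf : ContDiff ℝ (⊤ : ℕ∞) f) (i : Fin n) (t : ℝ) (x : Fin n → ℝ) :
    HasDerivAt (fun s => f (t, Function.update x i s)) (pX n i f (t, x)) (x i) := by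
  rw [pX_eq hf]
  exact hasDerivAt_space hf i t x

lemma contDiff_fderiv_apply (hf : ContDiff ℝ (⊤ : ℕ∞) f) (v : ℝ × (Fin n → ℝ)) :
    ContDiff ℝ (⊤ : ℕ∞) (fun p => fderiv ℝ f p v) :=
  (hf.fderiv_right (by simp)).clm_apply contDiff_const

lemma contDiff_pT (hf : ContDiff ℝ (⊤ : ℕ∞) f) : ContDiff ℝ (⊤ : ℕ∞) (pT n f) := by
  rw [pT_eq hf]
  exact contDiff_fderiv_apply hf _

lemma contDiff_pX (hf : ContDiff ℝ (⊤ : ℕ∞) f) (i : Fin n) :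
    ContDiff ℝ (⊤ : ℕ∞) (pX n i f) := by
  rw [pX_eq hf]
  exact contDiff_fderiv_apply hf _

lemma pT_pX_comm (hf : ContDiff ℝ (⊤ : ℕ∞) f) (i : Fin n) (p : ℝ × (Fin n → ℝ)) :
    pT n (pX n i f) p = pX n i (pT n f) p := by
  rw [pT_eq (contDiff_pX hf i), pX_eq (contDiff_pT hf) i, pX_eq hf, pT_eq hf]
  have hd : DifferentiableAt ℝ (fderiv ℝ f) p :=
    ((hf.fderiv_right (m := (⊤ : ℕ∞)) (by simp)).differentiable (by simp)) p
  have hs : IsSymmSndFDerivAt ℝ f p :=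
    hf.contDiffAt.isSymmSndFDerivAt (by rw [minSmoothness_of_isRCLikeNormedField]; exact ENat.LEInfty.out)
  have e : ∀ v w : ℝ × (Fin n → ℝ),
      fderiv ℝ (fun q => fderiv ℝ f q v) p w = fderiv ℝ (fderiv ℝ f) p w v := by
    intro v w
    rw [fderiv_clm_apply hd (differentiableAt_const v)]
    simp
  simp only [e]
  exact hs _ _

/-- The spatial derivative as a Fréchet derivative on the time slice, the form in which Mathlib
states integration by parts. -/
lemma pX_eq_slice (hf : ContDiff ℝ (⊤ : ℕ∞) f) (i : Fin n) (t : ℝ) (x : Fin n → ℝ) :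
    pX n i f (t, x) = fderiv ℝ (fun y => f (t, y)) x (Pi.single i 1) := by
  have h1 : HasFDerivAt (fun y => f (t, y)) (fderiv ℝ (fun y => f (t, y)) x)
      (Function.update x i (x i)) := by
    rw [Function.update_eq_self]
    have : ContDiff ℝ (⊤ : ℕ∞) (fun y => f (t, y)) := hf.comp (contDiff_const.prodMk contDiff_id)
    exact (this.differentiable (by simp) x).hasFDerivAt
  have h3 := h1.comp_hasDerivAt (x i) (hasDerivAt_update x i (x i))
  exact (hasDerivAt_pX hf i t x).unique h3

lemma integral_pX_eq_zero (hf : ContDiff ℝ (⊤ : ℕ∞) f) (i : Fin n) (t : ℝ)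
    (hc : HasCompactSupport fun x => f (t, x)) :
    Integrable (fun x => pX n i f (t, x)) ∧ ∫ x, pX n i f (t, x) = 0 := by
  have hs : ContDiff ℝ (⊤ : ℕ∞) (fun y => f (t, y)) := hf.comp (contDiff_const.prodMk contDiff_id)
  have hi : Integrable (fun x => fderiv ℝ (fun y => f (t, y)) x (Pi.single i 1)) := by
    refine Continuous.integrable_of_hasCompactSupport ?_ (hc.fderiv_apply (𝕜 := ℝ) _)
    exact (hs.continuous_fderiv (by simp)).clm_apply continuous_const
  simp only [pX_eq_slice hf]
  refine ⟨hi, ?_⟩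
  have := integral_mul_fderiv_eq_neg_fderiv_mul_of_integrable (𝕜 := ℝ) (μ := volume)
    (f := fun _ : Fin n → ℝ => (1 : ℝ)) (g := fun y => f (t, y)) (v := Pi.single i 1)
    (by simp) (by simpa using hi)
    (by simpa using hs.continuous.integrable_of_hasCompactSupport hc)
    (fun _ _ => differentiableAt_const _) (fun _ _ => hs.differentiable (by simp) _)
  simpa using this

lemma pX_eq_zero_of_eventually (hf : ContDiff ℝ (⊤ : ℕ∞) f) (i : Fin n) (t : ℝ)
    {x : Fin n → ℝ} (hx : ∀ᶠ y in 𝓝 x, f (t, y) = 0) : pX n i f (t, x) = 0 := by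
  have : (fun y => f (t, y)) =ᶠ[𝓝 x] fun _ => 0 := hx
  rw [pX_eq_slice hf, this.fderiv_eq]
  simp

lemma pT_eq_zero_of_eventually (hf : ContDiff ℝ (⊤ : ℕ∞) f) {t : ℝ}
    {x : Fin n → ℝ} (ht : ∀ᶠ s in 𝓝 t, f (s, x) = 0) : pT n f (t, x) = 0 :=
  (hasDerivAt_pT hf t x).unique ((hasDerivAt_const t (0 : ℝ)).congr_of_eventuallyEq ht)

/-- Differentiation under the integral sign when the integrand vanishes outside one compact set,
locally uniformly in time. -/
lemma hasDerivAt_integral_slice {F F' : ℝ × (Fin n → ℝ) → ℝ} (hF : Continuous F)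
    (hF' : Continuous F') (hd : ∀ t x, HasDerivAt (fun s => F (s, x)) (F' (t, x)) t)
    {t₀ ε : ℝ} (hε : 0 < ε) {K : Set (Fin n → ℝ)} (hK : IsCompact K)
    (h0 : ∀ t ∈ Metric.ball t₀ ε, ∀ x ∉ K, F (t, x) = 0) :
    Integrable (fun x => F' (t₀, x)) ∧
      HasDerivAt (fun t => ∫ x, F (t, x)) (∫ x, F' (t₀, x)) t₀ := by
  have h0' : ∀ t ∈ Metric.ball t₀ ε, ∀ x ∉ K, F' (t, x) = 0 := by
    intro t ht x hx
    have : (fun s => F (s, x)) =ᶠ[𝓝 t] fun _ => 0 := by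
      filter_upwards [Metric.isOpen_ball.mem_nhds ht] with s hs using h0 s hs x hx
    exact (hd t x).unique ((hasDerivAt_const t (0 : ℝ)).congr_of_eventuallyEq this)
  obtain ⟨C, hC⟩ := ((isCompact_closedBall t₀ ε).prod hK).exists_bound_of_continuousOn
    hF'.continuousOn
  have ht₀ : t₀ ∈ Metric.ball t₀ ε := Metric.mem_ball_self hε
  refine hasDerivAt_integral_of_dominated_loc_of_deriv_le (F := fun t x => F (t, x))
    (F' := fun t x => F' (t, x)) (s := Metric.ball t₀ ε) (bound := K.indicator fun _ => C)
    (Metric.ball_mem_nhds t₀ hε) (Filter.Eventually.of_forall fun t => ?_) ?_ ?_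
    (Filter.Eventually.of_forall fun x t ht => ?_) ?_
    (Filter.Eventually.of_forall fun x t _ => hd t x)
  · exact (hF.comp (Continuous.prodMk_right t)).aestronglyMeasurable
  · exact (hF.comp (Continuous.prodMk_right t₀)).integrable_of_hasCompactSupport
      (HasCompactSupport.intro hK (h0 t₀ ht₀))
  · exact (hF'.comp (Continuous.prodMk_right t₀)).aestronglyMeasurable
  · by_cases hx : x ∈ K
    · rw [Set.indicator_of_mem hx]
      exact hC (t, x) ⟨Metric.ball_subset_closedBall ht, hx⟩
    · rw [Set.indicator_of_notMem hx, h0' t ht x hx, norm_zero]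
  · exact (integrable_indicator_iff hK.measurableSet).2
      (integrableOn_const hK.measure_lt_top.ne)

end Calculus

/-! ### The weighted energy identity -/

section Energy

variable {n : ℕ} {φ w : ℝ × (Fin n → ℝ) → ℝ}

/-- The energy density `(φₜ² + e^{-t} |∇φ|²) / 2`. -/
noncomputable def energyDensity (n : ℕ) (φ : ℝ × (Fin n → ℝ) → ℝ) (p : ℝ × (Fin n → ℝ)) : ℝ :=
  (1 / 2) * (pT n φ p ^ 2 + Real.exp (-p.1) * ∑ i : Fin n, pX n i φ p ^ 2)

lemma energyDensity_nonneg (φ : ℝ × (Fin n → ℝ) → ℝ) (p : ℝ × (Fin n → ℝ)) :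
    0 ≤ energyDensity n φ p := by
  unfold energyDensity
  have := Finset.sum_nonneg fun (i : Fin n) (_ : i ∈ Finset.univ) => sq_nonneg (pX n i φ p)
  positivity

lemma continuous_energyDensity (hφ : ContDiff ℝ (⊤ : ℕ∞) φ) : Continuous (energyDensity n φ) := by
  unfold energyDensity
  have h1 := (contDiff_pT hφ).continuous
  have h2 := fun i => (contDiff_pX hφ i).continuous
  fun_prop

lemma energyDensity_eq_zero {p : ℝ × (Fin n → ℝ)} (hT : pT n φ p = 0)
    (hX : ∀ i, pX n i φ p = 0) : energyDensity n φ p = 0 := by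
  simp [energyDensity, hT, hX]

/-- The time derivative of the weighted density `energyDensity n φ * w`. -/
noncomputable def energyRate (n : ℕ) (φ w : ℝ × (Fin n → ℝ) → ℝ) (p : ℝ × (Fin n → ℝ)) : ℝ :=
  (pT n φ p * pT n (pT n φ) p + Real.exp (-p.1) * ∑ i : Fin n, pX n i φ p * pX n i (pT n φ) p
    - (1 / 2) * Real.exp (-p.1) * ∑ i : Fin n, pX n i φ p ^ 2) * w p
  + energyDensity n φ p * pT n w p

/-- What remains of `energyRate` for a solution after the divergence
`∑ᵢ ∂ᵢ (e^{-t} φₜ φᵢ w)` has been removed. -/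
noncomputable def reducedRate (n : ℕ) (φ w : ℝ × (Fin n → ℝ) → ℝ) (p : ℝ × (Fin n → ℝ)) : ℝ :=
  energyDensity n φ p * pT n w p
  - ((n : ℝ) / 2 + 1) * pT n φ p ^ 2 * w p
  - (1 / 2) * Real.exp (-p.1) * (∑ i : Fin n, pX n i φ p ^ 2) * w p
  - Real.exp (-p.1) * pT n φ p * ∑ i : Fin n, pX n i φ p * pX n i w p

lemma continuous_energyRate (hφ : ContDiff ℝ (⊤ : ℕ∞) φ) (hw : ContDiff ℝ (⊤ : ℕ∞) w) :
    Continuous (energyRate n φ w) := by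
  unfold energyRate
  have h0 := continuous_energyDensity hφ
  have h1 := (contDiff_pT hφ).continuous
  have h2 := fun i => (contDiff_pX hφ i).continuous
  have h3 := (contDiff_pT (contDiff_pT hφ)).continuous
  have h4 := fun i => (contDiff_pX (contDiff_pT hφ) i).continuous
  have h5 := (contDiff_pT hw).continuous
  have h6 := hw.continuous
  fun_prop

lemma hasDerivAt_energyDensity_mul (hφ : ContDiff ℝ (⊤ : ℕ∞) φ) (hw : ContDiff ℝ (⊤ : ℕ∞) w)
    (t : ℝ) (x : Fin n → ℝ) :
    HasDerivAt (fun s => energyDensity n φ (s, x) * w (s, x)) (energyRate n φ w (t, x)) t := by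
  have hT := (hasDerivAt_pT (contDiff_pT hφ) t x).pow 2
  have hX : HasDerivAt (fun s => ∑ i : Fin n, pX n i φ (s, x) ^ 2)
      (∑ i : Fin n, 2 * (pX n i φ (t, x) * pX n i (pT n φ) (t, x))) t := by
    refine HasDerivAt.fun_sum fun i _ => ?_
    convert! (hasDerivAt_pT (contDiff_pX hφ i) t x).pow 2 using 1
    rw [pT_pX_comm hφ]
    ring
  have hE : HasDerivAt (fun s : ℝ => Real.exp (-s)) (-Real.exp (-t)) t := by
    simpa using (hasDerivAt_neg t).exp
  have := ((hT.add (hE.mul hX)).const_mul (1 / 2)).mul (hasDerivAt_pT hw t x)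
  convert! this using 1
  simp only [energyRate, energyDensity, ← Finset.mul_sum, Pi.add_apply, Pi.mul_apply, Pi.pow_apply]
  push_cast
  ring

lemma pX_mul_mul {u v : ℝ × (Fin n → ℝ) → ℝ} (hu : ContDiff ℝ (⊤ : ℕ∞) u)
    (hv : ContDiff ℝ (⊤ : ℕ∞) v) (hw : ContDiff ℝ (⊤ : ℕ∞) w) (i : Fin n) (t : ℝ)
    (x : Fin n → ℝ) :
    pX n i (fun p => u p * v p * w p) (t, x) =
      (pX n i u (t, x) * v (t, x) + u (t, x) * pX n i v (t, x)) * w (t, x)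
        + u (t, x) * v (t, x) * pX n i w (t, x) := by
  have h := ((hasDerivAt_pX hu i t x).mul (hasDerivAt_pX hv i t x)).mul (hasDerivAt_pX hw i t x)
  have h' := h.deriv
  simp only [Pi.mul_apply, Function.update_eq_self] at h'
  exact h'

/-- The energy identity with an arbitrary smooth weight `w`: with the support of the weighted
density under control near `t₀`, differentiate under the integral, insert the equation, and discard
the divergence, which integrates to zero because `φ(t₀, ·)` has compact support. -/
lemma hasDerivAt_weighted_energy (hφ : ContDiff ℝ (⊤ : ℕ∞) φ) (hw : ContDiff ℝ (⊤ : ℕ∞) w)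
    {t₀ ε : ℝ} (hε : 0 < ε) {K : Set (Fin n → ℝ)} (hK : IsCompact K)
    (h0 : ∀ t ∈ Metric.ball t₀ ε, ∀ x ∉ K, energyDensity n φ (t, x) * w (t, x) = 0)
    (hc : HasCompactSupport fun x => φ (t₀, x))
    (heq : ∀ x, dBox n φ (t₀, x) - pT n φ (t₀, x) = 0) :
    HasDerivAt (fun t => ∫ x, energyDensity n φ (t, x) * w (t, x))
      (∫ x, reducedRate n φ w (t₀, x)) t₀ := by
  obtain ⟨hint, hder⟩ := hasDerivAt_integral_slice
    (F := fun p => energyDensity n φ p * w p) ((continuous_energyDensity hφ).mul hw.continuous)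
    (continuous_energyRate hφ hw) (hasDerivAt_energyDensity_mul hφ hw) hε hK h0
  have hG : ∀ i : Fin n, Integrable (fun x => pX n i (fun p => pT n φ p * pX n i φ p * w p) (t₀, x))
      ∧ ∫ x, pX n i (fun p => pT n φ p * pX n i φ p * w p) (t₀, x) = 0 := by
    intro i
    refine integral_pX_eq_zero (((contDiff_pT hφ).mul (contDiff_pX hφ i)).mul hw) i t₀ ?_
    refine HasCompactSupport.intro hc fun x hx => ?_
    rw [pX_eq_zero_of_eventually hφ i t₀ (notMem_tsupport_iff_eventuallyEq.1 hx)]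
    ring
  have key : ∀ x, reducedRate n φ w (t₀, x) = energyRate n φ w (t₀, x) - Real.exp (-t₀) *
      ∑ i : Fin n, pX n i (fun p => pT n φ p * pX n i φ p * w p) (t₀, x) := by
    intro x
    have hx := heq x
    simp only [dBox] at hx
    have hsum : ∑ i : Fin n, pX n i (fun p => pT n φ p * pX n i φ p * w p) (t₀, x) =
        (∑ i : Fin n, pX n i φ (t₀, x) * pX n i (pT n φ) (t₀, x)) * w (t₀, x)
        + pT n φ (t₀, x) * (∑ i : Fin n, pX n i (pX n i φ) (t₀, x)) * w (t₀, x)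
        + pT n φ (t₀, x) * ∑ i : Fin n, pX n i φ (t₀, x) * pX n i w (t₀, x) := by
      simp only [Finset.sum_mul, Finset.mul_sum, ← Finset.sum_add_distrib]
      refine Finset.sum_congr rfl fun i _ => ?_
      rw [pX_mul_mul (contDiff_pT hφ) (contDiff_pX hφ i) hw]
      ring
    rw [hsum]
    simp only [reducedRate, energyRate]
    linear_combination (pT n φ (t₀, x) * w (t₀, x)) * hx
  have hI : ∫ x, reducedRate n φ w (t₀, x) = ∫ x, energyRate n φ w (t₀, x) := by
    simp only [key]
    rw [integral_sub hint ((integrable_finsetSum _ fun i _ => (hG i).1).const_mul _),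
      integral_const_mul, integral_finsetSum _ fun i _ => (hG i).1]
    simp [fun i => (hG i).2]
  rw [hI]
  exact hder

end Energy

/-! ### Finite speed of propagation and locally uniform supports -/

section Propagation

variable {n : ℕ} {φ : ℝ × (Fin n → ℝ) → ℝ}

/-- The function `(b - t)² - |x - a|²`, positive exactly inside the light cone (of speed one) with
apex `(b, a)`. -/
def coneFun (n : ℕ) (b : ℝ) (a : Fin n → ℝ) (p : ℝ × (Fin n → ℝ)) : ℝ :=
  (b - p.1) ^ 2 - ∑ i, (p.2 i - a i) ^ 2

/-- A smooth weight that is positive inside the cone with apex `(b, a)` and zero outside. -/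
noncomputable def coneWeight (n : ℕ) (b : ℝ) (a : Fin n → ℝ) (p : ℝ × (Fin n → ℝ)) : ℝ :=
  expNegInvGlue (coneFun n b a p)

lemma contDiff_coneWeight (b : ℝ) (a : Fin n → ℝ) :
    ContDiff ℝ (⊤ : ℕ∞) (coneWeight n b a) := by
  unfold coneWeight coneFun
  refine expNegInvGlue.contDiff.comp (ContDiff.sub (by fun_prop) (ContDiff.sum fun i _ => ?_))
  have : ContDiff ℝ (⊤ : ℕ∞) fun p : ℝ × (Fin n → ℝ) => p.2 i :=
    (contDiff_apply ℝ ℝ i).comp contDiff_snd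
  exact (this.sub contDiff_const).pow 2

lemma differentiable_expNegInvGlue : Differentiable ℝ expNegInvGlue :=
  (expNegInvGlue.contDiff (n := 1)).differentiable (by simp)

lemma deriv_expNegInvGlue_nonneg (u : ℝ) : 0 ≤ deriv expNegInvGlue u :=
  expNegInvGlue.monotone.deriv_nonneg

lemma deriv_expNegInvGlue_of_neg {u : ℝ} (hu : u < 0) : deriv expNegInvGlue u = 0 := by
  have : expNegInvGlue =ᶠ[𝓝 u] fun _ => 0 := by
    filter_upwards [Iio_mem_nhds hu] with v hv using expNegInvGlue.zero_of_nonpos (le_of_lt hv)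
  rw [this.deriv_eq, deriv_const]

lemma pT_coneWeight (b : ℝ) (a : Fin n → ℝ) (t : ℝ) (x : Fin n → ℝ) :
    pT n (coneWeight n b a) (t, x) =
      deriv expNegInvGlue (coneFun n b a (t, x)) * (-2 * (b - t)) := by
  have h : HasDerivAt (fun s => coneFun n b a (s, x)) (-2 * (b - t)) t := by
    unfold coneFun
    convert! (((hasDerivAt_id t).const_sub b).pow 2).sub_const (∑ i, (x i - a i) ^ 2) using 1
    simp
  exact ((differentiable_expNegInvGlue _).hasDerivAt.comp t h).deriv

lemma pX_coneWeight (b : ℝ) (a : Fin n → ℝ) (i : Fin n) (t : ℝ) (x : Fin n → ℝ) :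
    pX n i (coneWeight n b a) (t, x) =
      deriv expNegInvGlue (coneFun n b a (t, x)) * (-2 * (x i - a i)) := by
  have h : HasDerivAt (fun s => coneFun n b a (t, Function.update x i s)) (-2 * (x i - a i))
      (x i) := by
    unfold coneFun
    have hs : HasDerivAt (fun s => ∑ j, (Function.update x i s j - a j) ^ 2)
        (∑ j, 2 * (x j - a j) * (Pi.single i (1 : ℝ) : Fin n → ℝ) j) (x i) := by
      refine HasDerivAt.fun_sum fun j _ => ?_
      have := ((hasDerivAt_pi.1 (hasDerivAt_update x i (x i)) j).sub_const (a j)).pow 2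
      convert! this using 1
      simp
    convert! hs.const_sub ((b - t) ^ 2) using 1
    simp [Pi.single_apply]
  have h2 : HasDerivAt expNegInvGlue (deriv expNegInvGlue (coneFun n b a (t, x)))
      (coneFun n b a (t, Function.update x i (x i))) := by
    rw [Function.update_eq_self]
    exact (differentiable_expNegInvGlue _).hasDerivAt
  exact (h2.comp (x i) h).deriv

/-- Cauchy–Schwarz and AM–GM combined: expand `0 ≤ |r p - a y|²` and divide by `r`. -/
lemma two_mul_mul_sum_le {r a : ℝ} (hr : 0 < r) (p y : Fin n → ℝ) (hy : ∑ i, y i ^ 2 ≤ r ^ 2) :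
    2 * (a * ∑ i, p i * y i) ≤ r * (a ^ 2 + ∑ i, p i ^ 2) := by
  have h : 0 ≤ ∑ i, (r * p i - a * y i) ^ 2 := Finset.sum_nonneg fun i _ => sq_nonneg _
  have e : ∑ i, (r * p i - a * y i) ^ 2 =
      r ^ 2 * ∑ i, p i ^ 2 - 2 * r * (a * ∑ i, p i * y i) + a ^ 2 * ∑ i, y i ^ 2 := by
    simp only [Finset.mul_sum, ← Finset.sum_sub_distrib, ← Finset.sum_add_distrib]
    exact Finset.sum_congr rfl fun i _ => by ring
  have h2 := mul_le_mul_of_nonneg_left hy (sq_nonneg a)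
  have : r * (2 * (a * ∑ i, p i * y i)) ≤ r * (r * (a ^ 2 + ∑ i, p i ^ 2)) := by nlinarith
  exact le_of_mul_le_mul_left this hr

/-- The cone weighted energy decreases: since the speed `e^{-t/2}` is at most one for `t ≥ 0`, the
flux `e^{-t} φₜ ∇φ` through the shrinking cone is dominated by the loss of energy density. -/
lemma reducedRate_coneWeight_nonpos {b t : ℝ} (ht : 0 ≤ t) (htb : t < b) (a x : Fin n → ℝ) :
    reducedRate n φ (coneWeight n b a) (t, x) ≤ 0 := by
  simp only [reducedRate, pT_coneWeight, pX_coneWeight]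
  have hw : 0 ≤ coneWeight n b a (t, x) := expNegInvGlue.nonneg _
  have hS : 0 ≤ ∑ i : Fin n, pX n i φ (t, x) ^ 2 := Finset.sum_nonneg fun i _ => sq_nonneg _
  have he : 0 < Real.exp (-t) := Real.exp_pos _
  have he1 : Real.exp (-t) ≤ 1 := Real.exp_le_one_iff.2 (by linarith)
  have h1 : 0 ≤ ((n : ℝ) / 2 + 1) * pT n φ (t, x) ^ 2 * coneWeight n b a (t, x) := by positivity
  have h2 : 0 ≤ (1 / 2) * Real.exp (-t) * (∑ i : Fin n, pX n i φ (t, x) ^ 2)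
      * coneWeight n b a (t, x) := by positivity
  have hsum : ∑ i : Fin n, pX n i φ (t, x) *
      (deriv expNegInvGlue (coneFun n b a (t, x)) * (-2 * (x i - a i))) =
      -2 * deriv expNegInvGlue (coneFun n b a (t, x)) *
        ∑ i : Fin n, pX n i φ (t, x) * (x i - a i) := by
    rw [Finset.mul_sum]
    exact Finset.sum_congr rfl fun i _ => by ring
  rw [hsum]
  have h3 : energyDensity n φ (t, x) *
        (deriv expNegInvGlue (coneFun n b a (t, x)) * (-2 * (b - t)))
      - Real.exp (-t) * pT n φ (t, x) * (-2 * deriv expNegInvGlue (coneFun n b a (t, x)) *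
        ∑ i : Fin n, pX n i φ (t, x) * (x i - a i)) ≤ 0 := by
    rcases lt_or_ge (coneFun n b a (t, x)) 0 with hneg | hpos
    · simp [deriv_expNegInvGlue_of_neg hneg]
    · have hg := deriv_expNegInvGlue_nonneg (coneFun n b a (t, x))
      have hy : ∑ i, (x i - a i) ^ 2 ≤ (b - t) ^ 2 := by
        simp only [coneFun] at hpos
        linarith
      have hk := two_mul_mul_sum_le (a := pT n φ (t, x)) (sub_pos.2 htb) (fun i => pX n i φ (t, x))
        (fun i => x i - a i) hy
      set g := deriv expNegInvGlue (coneFun n b a (t, x))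
      set A := pT n φ (t, x)
      set S := ∑ i : Fin n, pX n i φ (t, x) ^ 2
      set P := ∑ i : Fin n, pX n i φ (t, x) * (x i - a i)
      have hr : 0 < b - t := sub_pos.2 htb
      have hk' : Real.exp (-t) * (2 * (A * P)) ≤ (b - t) * (A ^ 2 + Real.exp (-t) * S) := by
        have q1 := mul_le_mul_of_nonneg_left hk he.le
        have q2 : Real.exp (-t) * ((b - t) * A ^ 2) ≤ 1 * ((b - t) * A ^ 2) :=
          mul_le_mul_of_nonneg_right he1 (by positivity)
        linarith
      have := mul_le_mul_of_nonneg_left hk' hg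
      have hE : energyDensity n φ (t, x) = (1 / 2) * (A ^ 2 + Real.exp (-t) * S) := rfl
      rw [hE]
      linarith
  linarith

/-- A Euclidean bound gives the same bound in the sup norm carried by `Fin n → ℝ`. -/
lemma dist_le_of_sum_sq_le {r : ℝ} (hr : 0 ≤ r) {a x : Fin n → ℝ}
    (h : ∑ i, (x i - a i) ^ 2 ≤ r ^ 2) : dist x a ≤ r := by
  refine (dist_pi_le_iff hr).2 fun i => ?_
  rw [Real.dist_eq]
  refine abs_le_of_sq_le_sq ((Finset.single_le_sum (f := fun i => (x i - a i) ^ 2)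
    (fun j _ => sq_nonneg _) (Finset.mem_univ i)).trans h) hr

/-- Finite speed of propagation: the cone weighted energy is nonnegative, starts at zero and does
not increase, so it stays zero. Thus if the energy density vanishes at time `s` on the base of the
cone with apex `(b, a)`, then `φₜ` vanishes on the axis of the cone. -/
lemma pT_eq_zero_of_cone (hφ : ContDiff ℝ (⊤ : ℕ∞) φ)
    (hsupp : ∀ t : ℝ, 0 ≤ t → HasCompactSupport fun x => φ (t, x))
    (heq : ∀ p : ℝ × (Fin n → ℝ), 0 ≤ p.1 → dBox n φ p - pT n φ p = 0)
    {s b : ℝ} (hs : 0 ≤ s) (a : Fin n → ℝ)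
    (h0 : ∀ y, ∑ i, (y i - a i) ^ 2 < (b - s) ^ 2 → energyDensity n φ (s, y) = 0)
    {t : ℝ} (ht : t ∈ Set.Ico s b) : pT n φ (t, a) = 0 := by
  have hzero : ∀ τ x, (b - τ) ^ 2 ≤ ∑ i, (x i - a i) ^ 2 → coneWeight n b a (τ, x) = 0 :=
    fun τ x h => expNegInvGlue.zero_of_nonpos (by simpa [coneFun] using h)
  have houter : ∀ R, 0 ≤ R → ∀ τ, |b - τ| ≤ R → ∀ x ∉ Metric.closedBall a R,
      coneWeight n b a (τ, x) = 0 := by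
    intro R hR τ hτ x hx
    refine hzero τ x ?_
    by_contra! hlt
    have : (b - τ) ^ 2 ≤ R ^ 2 := sq_le_sq' (abs_le.1 hτ).1 (abs_le.1 hτ).2
    exact hx (dist_le_of_sum_sq_le hR (hlt.le.trans this))
  set W : ℝ → ℝ := fun τ => ∫ x, energyDensity n φ (τ, x) * coneWeight n b a (τ, x) with hW
  have hder : ∀ τ, 0 ≤ τ →
      HasDerivAt W (∫ x, reducedRate n φ (coneWeight n b a) (τ, x)) τ := by
    intro τ hτ
    refine hasDerivAt_weighted_energy hφ (contDiff_coneWeight b a) one_pos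
      (isCompact_closedBall a (|b - τ| + 1)) (fun σ hσ x hx => ?_) (hsupp τ hτ)
      (fun x => heq (τ, x) hτ)
    rw [houter _ (by positivity) σ ?_ x hx, mul_zero]
    rw [Metric.mem_ball, Real.dist_eq] at hσ
    calc |b - σ| = |(b - τ) - (σ - τ)| := by ring_nf
      _ ≤ |b - τ| + |σ - τ| := abs_sub _ _
      _ ≤ |b - τ| + 1 := by linarith
  have hanti : AntitoneOn W (Set.Ico s b) := by
    refine antitoneOn_of_deriv_nonpos (convex_Ico s b)
      (fun τ hτ => (hder τ (hs.trans hτ.1)).continuousAt.continuousWithinAt) ?_ ?_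
    · rw [interior_Ico]
      exact fun τ hτ => (hder τ (hs.trans hτ.1.le)).differentiableAt.differentiableWithinAt
    · rw [interior_Ico]
      intro τ hτ
      rw [(hder τ (hs.trans hτ.1.le)).deriv]
      exact integral_nonpos fun x => reducedRate_coneWeight_nonpos (hs.trans hτ.1.le) hτ.2 a x
  have hWs : W s = 0 := by
    rw [hW]
    refine integral_eq_zero_of_ae (Filter.Eventually.of_forall fun x => ?_)
    rcases lt_or_ge (∑ i, (x i - a i) ^ 2) ((b - s) ^ 2) with h | h
    · simp [h0 x h]
    · simp [hzero s x h]
  have hWt : W t ≤ 0 := hWs ▸ hanti ⟨le_rfl, ht.1.trans_lt ht.2⟩ ht ht.1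
  have hprod : energyDensity n φ (t, a) * coneWeight n b a (t, a) = 0 := by
    by_contra hne
    refine absurd hWt (not_le.2 ?_)
    refine Continuous.integral_pos_of_hasCompactSupport_nonneg_nonzero (x := a) ?_ ?_ ?_ hne
    · exact ((continuous_energyDensity hφ).mul (contDiff_coneWeight b a).continuous).comp
        (Continuous.prodMk_right t)
    · refine HasCompactSupport.intro (isCompact_closedBall a |b - t|) fun x hx => ?_
      rw [houter _ (abs_nonneg _) t le_rfl x hx, mul_zero]
    · exact fun x => mul_nonneg (energyDensity_nonneg φ _) (expNegInvGlue.nonneg _)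
  have hwpos : 0 < coneWeight n b a (t, a) := by
    refine expNegInvGlue.pos_of_pos ?_
    have : 0 < b - t := sub_pos.2 ht.2
    simp only [coneFun, sub_self]
    simp
    positivity
  have hE : energyDensity n φ (t, a) = 0 := (mul_eq_zero.1 hprod).resolve_right hwpos.ne'
  have hS : 0 ≤ Real.exp (-t) * ∑ i : Fin n, pX n i φ (t, a) ^ 2 :=
    mul_nonneg (Real.exp_pos _).le (Finset.sum_nonneg fun i _ => sq_nonneg _)
  simp only [energyDensity] at hE
  exact pow_eq_zero_iff (two_ne_zero) |>.1 (by nlinarith [sq_nonneg (pT n φ (t, a))])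

/-- Baire category: on every interval of positive times there is a shorter one on which the
supports of `φ(t, ·)` lie in a common ball. This also bounds the support of `φₜ`, about which the
compactness of the support of a single slice says nothing. -/
lemma exists_uniform_support (hφ : ContDiff ℝ (⊤ : ℕ∞) φ)
    (hsupp : ∀ t : ℝ, 0 ≤ t → HasCompactSupport fun x => φ (t, x)) {t₀ : ℝ} (ht₀ : 0 < t₀) :
    ∃ s ∈ Set.Ioo 0 t₀, ∃ N : ℝ, ∀ᶠ t in 𝓝 s, ∀ x, N < ‖x‖ → φ (t, x) = 0 := by
  let C : ℕ → Set ℝ := fun N => {t | ∀ x, (N : ℝ) < ‖x‖ → φ (t, x) = 0} ∪ Set.Iic 0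
  have hclosed : ∀ N, IsClosed (C N) := by
    intro N
    refine IsClosed.union ?_ isClosed_Iic
    simp only [Set.ofPred_forall]
    refine isClosed_iInter fun x => isClosed_iInter fun _ => ?_
    exact isClosed_eq (hφ.continuous.comp (Continuous.prodMk_left x)) continuous_const
  have hunion : ⋃ N, C N = Set.univ := by
    refine Set.eq_univ_of_forall fun t => ?_
    rcases le_total t 0 with h | h
    · exact Set.mem_iUnion.2 ⟨0, Or.inr h⟩
    · obtain ⟨R, hR⟩ := (hsupp t h).isCompact.isBounded.subset_closedBall 0
      obtain ⟨N, hN⟩ := exists_nat_ge R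
      refine Set.mem_iUnion.2 ⟨N, Or.inl fun x hx => ?_⟩
      by_contra hne
      have := hR (subset_tsupport _ hne)
      rw [mem_closedBall_zero_iff] at this
      linarith
  obtain ⟨s, hs, hsI⟩ := (dense_iUnion_interior_of_closed hclosed hunion).inter_open_nonempty
    (Set.Ioo 0 t₀) isOpen_Ioo (Set.nonempty_Ioo.2 ht₀)
  obtain ⟨N, hN⟩ := Set.mem_iUnion.1 hsI
  refine ⟨s, hs, N, ?_⟩
  filter_upwards [mem_interior_iff_mem_nhds.1 hN, Ioi_mem_nhds hs.1] with t h1 h2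
  exact h1.resolve_right (Set.notMem_Iic.2 h2)

/-- Near every positive time the supports of the slices `φ(t, ·)` lie in a common ball. -/
lemma exists_locally_uniform_support (hφ : ContDiff ℝ (⊤ : ℕ∞) φ)
    (hsupp : ∀ t : ℝ, 0 ≤ t → HasCompactSupport fun x => φ (t, x))
    (heq : ∀ p : ℝ × (Fin n → ℝ), 0 ≤ p.1 → dBox n φ p - pT n φ p = 0)
    {t₀ : ℝ} (ht₀ : 0 < t₀) :
    ∃ ε > 0, ∃ R : ℝ, ∀ t ∈ Metric.ball t₀ ε, ∀ x ∉ Metric.closedBall (0 : Fin n → ℝ) R,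
      φ (t, x) = 0 := by
  obtain ⟨s, hs, N, hN⟩ := exists_uniform_support hφ hsupp ht₀
  have hE : ∀ y : Fin n → ℝ, N < ‖y‖ → energyDensity n φ (s, y) = 0 := by
    intro y hy
    refine energyDensity_eq_zero (pT_eq_zero_of_eventually hφ ?_)
      fun i => pX_eq_zero_of_eventually hφ i s ?_
    · filter_upwards [hN] with t ht using ht y hy
    · filter_upwards [(isOpen_lt continuous_const continuous_norm).mem_nhds hy] with z hz
        using hN.self_of_nhds z hz
  refine ⟨t₀ - s, sub_pos.2 hs.2, N + (2 * t₀ - s), fun t ht x hx => ?_⟩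
  rw [Metric.mem_ball, Real.dist_eq, abs_lt] at ht
  rw [mem_closedBall_zero_iff, not_le] at hx
  have hr : 0 ≤ 2 * t₀ - s := by linarith [hs.2]
  have hpT : ∀ τ ∈ Set.Ico s (2 * t₀), pT n φ (τ, x) = 0 := by
    intro τ hτ
    refine pT_eq_zero_of_cone hφ hsupp heq hs.1.le x (fun y hy => hE y ?_) hτ
    have h1 := dist_le_of_sum_sq_le hr hy.le
    rw [dist_comm, dist_eq_norm] at h1
    have h2 : ‖x‖ ≤ ‖x - y‖ + ‖y‖ := by simpa using norm_add_le (x - y) y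
    linarith
  have hconst := constant_of_has_deriv_right_zero (f := fun τ => φ (τ, x)) (a := s) (b := t)
    ((hφ.continuous.comp (Continuous.prodMk_left x)).continuousOn) (fun τ hτ => by
      have h := hasDerivAt_pT hφ τ x
      rw [hpT τ ⟨hτ.1, by linarith [hτ.2, hs.1]⟩] at h
      exact h.hasDerivWithinAt)
  have h1 : φ (t, x) = φ (s, x) := hconst t ⟨by linarith, le_rfl⟩
  rw [h1]
  exact hN.self_of_nhds x (by linarith)

end Propagation

/-! ### The energy identity -/

/-- Zeroth-order energy identity: for a compactly supported smooth solution of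
`□_gφ - φₜ = 0`, the energy `E = E₀ + E₁` is differentiable with
`E'(t) = -((n+4)/2)E₀(t) + ((n-2)/2)E₁(t)`. -/
theorem stmt6 (n : ℕ) (hn : 1 ≤ n) (φ : ℝ × (Fin n → ℝ) → ℝ) (hφ : ContDiff ℝ (⊤ : ℕ∞) φ)
    (hsupp : ∀ t : ℝ, 0 ≤ t → HasCompactSupport fun x => φ (t, x))
    (heq : ∀ p : ℝ × (Fin n → ℝ), 0 ≤ p.1 → dBox n φ p - pT n φ p = 0)
    (E0 E1 E : ℝ → ℝ)
    (hE0 : ∀ t, E0 t = (1/2) * ∫ x : Fin n → ℝ,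
      (pT n φ (t, x)) ^ 2 * Real.exp ((n : ℝ) * t / 2))
    (hE1 : ∀ t, E1 t = (1/2) * ∫ x : Fin n → ℝ,
      Real.exp (-t) * (∑ i : Fin n, (pX n i φ (t, x)) ^ 2) * Real.exp ((n : ℝ) * t / 2))
    (hE : ∀ t, E t = E0 t + E1 t) :
    ∀ t : ℝ, 0 < t →
      HasDerivAt E (-(((n : ℝ) + 4) / 2) * E0 t + (((n : ℝ) - 2) / 2) * E1 t) t := by
  intro t ht
  obtain ⟨ε, hε, R, h0⟩ := exists_locally_uniform_support hφ hsupp heq ht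
  set K : Set (Fin n → ℝ) := Metric.closedBall 0 R with hKdef
  have hK : IsCompact K := isCompact_closedBall 0 R
  have hT0 : ∀ s ∈ Metric.ball t ε, ∀ x ∉ K, pT n φ (s, x) = 0 := by
    intro s hs x hx
    refine pT_eq_zero_of_eventually hφ ?_
    filter_upwards [Metric.isOpen_ball.mem_nhds hs] with r hr using h0 r hr x hx
  have hX0 : ∀ s ∈ Metric.ball t ε, ∀ x ∉ K, ∀ i, pX n i φ (s, x) = 0 := by
    intro s hs x hx i
    refine pX_eq_zero_of_eventually hφ i s ?_
    filter_upwards [hK.isClosed.isOpen_compl.mem_nhds hx] with y hy using h0 s hs y hy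
  set w : ℝ × (Fin n → ℝ) → ℝ := fun p => Real.exp ((n : ℝ) * p.1 / 2) with hwdef
  have hw : ContDiff ℝ (⊤ : ℕ∞) w := by
    rw [hwdef]
    fun_prop
  have hcT := (contDiff_pT hφ).continuous
  have hcX := fun i => (contDiff_pX hφ i).continuous
  -- The two parts of the energy are separately integrable, so the integrals may be combined.
  have hI0 : ∀ s ∈ Metric.ball t ε, Integrable fun x : Fin n → ℝ =>
      (pT n φ (s, x)) ^ 2 * Real.exp ((n : ℝ) * s / 2) := by
    intro s hs
    refine Continuous.integrable_of_hasCompactSupport (by fun_prop)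
      (HasCompactSupport.intro hK fun x hx => ?_)
    simp [hT0 s hs x hx]
  have hI1 : ∀ s ∈ Metric.ball t ε, Integrable fun x : Fin n → ℝ =>
      Real.exp (-s) * (∑ i : Fin n, (pX n i φ (s, x)) ^ 2) * Real.exp ((n : ℝ) * s / 2) := by
    intro s hs
    refine Continuous.integrable_of_hasCompactSupport (by fun_prop)
      (HasCompactSupport.intro hK fun x hx => ?_)
    simp [hX0 s hs x hx]
  have hcomb : ∀ s ∈ Metric.ball t ε, ∀ c d : ℝ, c * E0 s + d * E1 s =
      ∫ x : Fin n → ℝ, ((c / 2) * ((pT n φ (s, x)) ^ 2 * Real.exp ((n : ℝ) * s / 2)) + (d / 2) *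
        (Real.exp (-s) * (∑ i : Fin n, (pX n i φ (s, x)) ^ 2) * Real.exp ((n : ℝ) * s / 2))) := by
    intro s hs c d
    rw [integral_add ((hI0 s hs).const_mul _) ((hI1 s hs).const_mul _), integral_const_mul,
      integral_const_mul, hE0, hE1]
    ring
  have hmain := hasDerivAt_weighted_energy hφ hw hε hK (fun s hs x hx => by
      rw [energyDensity_eq_zero (hT0 s hs x hx) (hX0 s hs x hx), zero_mul])
    (hsupp t ht.le) (fun x => heq (t, x) ht.le)
  have hEeq : E =ᶠ[𝓝 t] fun s => ∫ x, energyDensity n φ (s, x) * w (s, x) := by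
    filter_upwards [Metric.ball_mem_nhds t hε] with s hs
    have h := hcomb s hs 1 1
    rw [one_mul, one_mul] at h
    rw [hE, h]
    refine integral_congr_ae (Filter.Eventually.of_forall fun x => ?_)
    simp only [energyDensity, hwdef]
    ring
  have hpTw : ∀ x, pT n w (t, x) = (n : ℝ) / 2 * w (t, x) := by
    intro x
    have h : HasDerivAt (fun s : ℝ => (n : ℝ) * s / 2) ((n : ℝ) / 2) t := by
      simpa using ((hasDerivAt_id t).const_mul (n : ℝ)).div_const 2
    refine h.exp.deriv.trans ?_
    simp only [hwdef]
    ring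
  have hpXw : ∀ i x, pX n i w (t, x) = 0 := fun i x => by simp [pX, hwdef]
  rw [hcomb t (Metric.mem_ball_self hε)]
  refine (hmain.congr_of_eventuallyEq hEeq).congr_deriv ?_
  refine integral_congr_ae (Filter.Eventually.of_forall fun x => ?_)
  simp only [reducedRate, energyDensity, hpTw, hpXw, mul_zero, Finset.sum_const_zero]
  simp only [hwdef]
  ring
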